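/- Let $\bar P \in \mathbb{R}^{n \times n}$ be symmetric positive definite, let $W_a \in \mathbb{R}^{n \times p}$, $G \in \mathbb{R}^{p \times n}$, $W_d \in \mathbb{R}^{n \times q}$, $\bar V \in \mathbb{R}^{p \times r}$, and let $\kappa \geq 0$ satisfy $(I - W_a G)^\top \bar P (I - W_a G) \preceq \kappa^2 \bar P$. If $\xi \in \mathbb{R}^q$ satisfies $\lVert W_d \xi \rVert_{\bar P}^2 \leq 1$ and $\bar a \in \mathbb{R}^r$ satisfies $\lVert W_a \bar V \bar a \rVert_{\bar P}^2 \leq \frac{1}{2} - \kappa^2$, then $\lVert (I - W_a G) W_d \xi + W_a \bar V \bar a \rVert_{\bar P}^2 \leq 1$. -/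

import Mathlib

/-!
Write `‖x‖²` for the `P`-weighted squared norm. The parallelogram law gives
`‖x + y‖² ≤ 2‖x‖² + 2‖y‖²`. Take `x = (I - Wa G) Wd ξ` and `y = Wa V abar`: the domination
hypothesis gives `‖x‖² ≤ κ² ‖Wd ξ‖² ≤ κ²`, and `‖y‖² ≤ 1/2 - κ²`, so the bound is
`2κ² + 2(1/2 - κ²) = 1`.
-/

open Matrix

/-- The parallelogram inequality for the form of a positive semidefinite matrix: the
parallelogram law, with the nonnegative term at `x - y` dropped. -/
lemma quadForm_add_le {n : ℕ} {P : Matrix (Fin n) (Fin n) ℝ} (hP : P.PosSemidef)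
    (x y : Fin n → ℝ) :
    (x + y) ⬝ᵥ (P *ᵥ (x + y)) ≤ 2 * (x ⬝ᵥ (P *ᵥ x)) + 2 * (y ⬝ᵥ (P *ᵥ y)) := by
  have h := hP.dotProduct_mulVec_nonneg (x - y)
  simp only [star_trivial, mulVec_sub, dotProduct_sub, sub_dotProduct] at h
  simp only [mulVec_add, dotProduct_add, add_dotProduct]
  linarith

/-- Evaluating `Mᵀ P M ⪯ c P` on a vector bounds the `P`-form of `M w` by `c` times
that of `w`. -/
lemma quadForm_mulVec_le {n : ℕ} {P M : Matrix (Fin n) (Fin n) ℝ} {c : ℝ}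
    (h : (c • P - Mᵀ * P * M).PosSemidef) (w : Fin n → ℝ) :
    (M *ᵥ w) ⬝ᵥ (P *ᵥ (M *ᵥ w)) ≤ c * (w ⬝ᵥ (P *ᵥ w)) := by
  have h := h.dotProduct_mulVec_nonneg w
  have e : w ⬝ᵥ ((Mᵀ * P * M) *ᵥ w) = (M *ᵥ w) ⬝ᵥ (P *ᵥ (M *ᵥ w)) := by
    rw [← mulVec_mulVec, ← mulVec_mulVec, dotProduct_mulVec, vecMul_transpose]
  rw [star_trivial, sub_mulVec, dotProduct_sub, e, smul_mulVec, dotProduct_smul,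
    smul_eq_mul] at h
  linarith

/-- Theorem 3 of the paper: stealthiness condition under a row-rank-deficient attack
projection matrix. `G` plays the role of the pseudoinverse `W_a†`, and the domination
hypothesis `(I - W_a G)ᵀ P̄ (I - W_a G) ⪯ κ² P̄` encodes the spectral-norm bound. -/
theorem stmt_6 {n p q r : ℕ}
    (P : Matrix (Fin n) (Fin n) ℝ) (hP : P.PosDef)
    (Wa : Matrix (Fin n) (Fin p) ℝ) (G : Matrix (Fin p) (Fin n) ℝ)
    (Wd : Matrix (Fin n) (Fin q) ℝ) (V : Matrix (Fin p) (Fin r) ℝ)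
    (κ : ℝ) (hκ : 0 ≤ κ)
    (hdom : (κ ^ 2 • P - (1 - Wa * G)ᵀ * P * (1 - Wa * G)).PosSemidef)
    (ξ : Fin q → ℝ) (hξ : (Wd *ᵥ ξ) ⬝ᵥ (P *ᵥ (Wd *ᵥ ξ)) ≤ 1)
    (abar : Fin r → ℝ)
    (habar : (Wa *ᵥ (V *ᵥ abar)) ⬝ᵥ (P *ᵥ (Wa *ᵥ (V *ᵥ abar))) ≤ 1 / 2 - κ ^ 2) :
    ((1 - Wa * G) *ᵥ (Wd *ᵥ ξ) + Wa *ᵥ (V *ᵥ abar)) ⬝ᵥ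
      (P *ᵥ ((1 - Wa * G) *ᵥ (Wd *ᵥ ξ) + Wa *ᵥ (V *ᵥ abar))) ≤ 1 := by
  have h1 := quadForm_add_le hP.posSemidef ((1 - Wa * G) *ᵥ (Wd *ᵥ ξ)) (Wa *ᵥ (V *ᵥ abar))
  have h2 := quadForm_mulVec_le hdom (Wd *ᵥ ξ)
  have h3 := mul_le_mul_of_nonneg_left hξ (sq_nonneg κ)
  linarith
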